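/- Minimal Lorentzian surfaces lying in a Lorentzian hyperplane have pointwise 1-type Gauss map of the first kind (Proposition 3.2(i) / Corollary 3.7 direction, explicit form): in the setting of a minimal Lorentzian surface x(s,t) = α(s) + β(t) in null coordinates, suppose there exist a constant vector e₄ ∈ ℝ⁴ with B(e₄,e₄) > 0 and a constant c ∈ ℝ such that B(x(s,t), e₄) = c for all (s,t). Then at every point η₁ ∧ η₂ = 0, and consequently the Gauss map satisfies Δν = 2K·ν with K := B(η₁,η₂)/m⁴, where Δν := (2/m²)·∂²ν/∂s∂t; i.e. ν is of pointwise 1-type of the first kind with f = 2K. -/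

import Mathlib

noncomputable section

/-- The Minkowski bilinear form on `ℝ⁴ = Fin 4 → ℝ`:
`B(v,w) = -v₀w₀ + v₁w₁ + v₂w₂ + v₃w₃`. -/
def B4 (v w : Fin 4 → ℝ) : ℝ :=
  -(v 0 * w 0) + v 1 * w 1 + v 2 * w 2 + v 3 * w 3

/-- The wedge product `v ∧ w`, modelled concretely as the antisymmetric array
`(i,j) ↦ vᵢwⱼ - vⱼwᵢ` (a faithful model of the second exterior power `Λ²(ℝ⁴)`). -/
def wedge (v w : Fin 4 → ℝ) : Fin 4 → Fin 4 → ℝ :=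
  fun i j => v i * w j - v j * w i

/-- Partial derivative of a two-parameter map with respect to the first variable. -/
def pds {E : Type*} [NormedAddCommGroup E] [NormedSpace ℝ E]
    (x : ℝ → ℝ → E) (s t : ℝ) : E :=
  deriv (fun u => x u t) s

/-- Partial derivative of a two-parameter map with respect to the second variable. -/
def pdt {E : Type*} [NormedAddCommGroup E] [NormedSpace ℝ E]
    (x : ℝ → ℝ → E) (s t : ℝ) : E :=
  deriv (fun u => x s u) t

/-- `m²(s,t) = -B(α'(s), β'(t))`, the conformal factor of the induced metric
`-m²(ds⊗dt + dt⊗ds)` of the minimal Lorentzian surface `x(s,t) = α(s) + β(t)`. -/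
def msq (α β : ℝ → Fin 4 → ℝ) (s t : ℝ) : ℝ :=
  -B4 (deriv α s) (deriv β t)

/-- `η₁ = h(∂s,∂s)`: the component of `x_{ss} = α''` orthogonal to the tangent
plane `span{α'(s), β'(t)}`. -/
def eta1 (α β : ℝ → Fin 4 → ℝ) (s t : ℝ) : Fin 4 → ℝ :=
  deriv (deriv α) s
    - (B4 (deriv (deriv α) s) (deriv β t) / B4 (deriv α s) (deriv β t)) • deriv α s

/-- `η₂ = h(∂t,∂t)`: the component of `x_{tt} = β''` orthogonal to the tangent
plane `span{α'(s), β'(t)}`. -/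
def eta2 (α β : ℝ → Fin 4 → ℝ) (s t : ℝ) : Fin 4 → ℝ :=
  deriv (deriv β) t
    - (B4 (deriv (deriv β) t) (deriv α s) / B4 (deriv α s) (deriv β t)) • deriv β t

/-- The Gauss map `ν = (1/m²)·(α'(s) ∧ β'(t))`, valued in (a model of) `Λ²(ℝ⁴)`. -/
def gaussMap (α β : ℝ → Fin 4 → ℝ) (s t : ℝ) : Fin 4 → Fin 4 → ℝ :=
  (1 / msq α β s t) • wedge (deriv α s) (deriv β t)

/-- The Laplace–Beltrami operator of the induced metric `-m²(ds⊗dt + dt⊗ds)`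
(with the sign convention of the paper) acting on `Λ²(ℝ⁴)`-valued maps:
`Δξ = (2/m²)·∂²ξ/∂s∂t`. -/
def lap (α β : ℝ → Fin 4 → ℝ) (ξ : ℝ → ℝ → (Fin 4 → Fin 4 → ℝ)) (s t : ℝ) :
    Fin 4 → Fin 4 → ℝ :=
  (2 / msq α β s t) • pds (pdt ξ) s t

/-!
The projection `α'' ↦ η₁` is exactly what the product rule produces when `α' ∧ w` is divided by
`m²`, and likewise for `β'' ↦ η₂`, so `∂ₜν = (1/m²) α' ∧ η₂`; since moreover
`∂ₛη₂ = (B(η₁,η₂)/m²) β'`, every surface `α(s) + β(t)` with `m² ≠ 0` satisfies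
`Δν = 2Kν + (2/m⁴) η₁ ∧ η₂`. In a hyperplane with normal `e`, the vectors `η₁` and `η₂` are both
orthogonal to the three independent vectors `α'`, `β'`, `e` of `ℝ⁴`, hence proportional, and the
last term vanishes.
-/

open Set Filter Topology Module

section LinearAlgebra

variable {K V E : Type*} [Field K] [AddCommGroup V] [Module K V] [AddCommGroup E] [Module K E]
  {B : LinearMap.BilinForm K V} {a b e u v : V}

theorem linearIndependent_of_isotropic_pair_of_orthogonal (hB : B.IsRefl) (haa : B a a = 0)
    (hbb : B b b = 0) (hab : B a b ≠ 0) (hae : B a e = 0) (hbe : B b e = 0) (he : e ≠ 0) :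
    LinearIndependent K ![a, b, e] := by
  rw [Fintype.linearIndependent_iff]
  intro g hg
  replace hg : g 0 • a + g 1 • b + g 2 • e = 0 := by simpa [Fin.sum_univ_three] using hg
  have hba : B b a ≠ 0 := fun h => hab (hB.eq_zero h)
  have hg1 : g 1 = 0 := by simpa [haa, hae, hab] using congrArg (B a) hg
  have hg0 : g 0 = 0 := by simpa [hbb, hbe, hba] using congrArg (B b) hg
  have hg2 : g 2 = 0 := by simpa [hg0, hg1, he] using hg
  intro i
  fin_cases i <;> assumption

theorem mem_orthogonal_span_iff {s : Set V} :
    v ∈ B.orthogonal (Submodule.span K s) ↔ ∀ w ∈ s, B w v = 0 :=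
  (Submodule.span_le (p := LinearMap.ker (B.flip v))).trans Iff.rfl

theorem finrank_orthogonal_span_isotropic_pair_of_orthogonal [FiniteDimensional K V]
    (hB : B.Nondegenerate) (hB' : B.IsRefl) (haa : B a a = 0) (hbb : B b b = 0) (hab : B a b ≠ 0)
    (hae : B a e = 0) (hbe : B b e = 0) (he : e ≠ 0) :
    finrank K (B.orthogonal (Submodule.span K {a, b, e})) = finrank K V - 3 := by
  have hrange : range ![a, b, e] = {a, b, e} := by
    simp only [Matrix.range_cons, Matrix.range_empty, union_empty, singleton_union]
  have hli := linearIndependent_of_isotropic_pair_of_orthogonal hB' haa hbb hab hae hbe he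
  rw [LinearMap.BilinForm.finrank_orthogonal hB, ← hrange, finrank_span_eq_card hli,
    Fintype.card_fin]

theorem isAlt_apply_eq_zero_of_mem_of_finrank_le_one {W : V →ₗ[K] V →ₗ[K] E} (hW : W.IsAlt)
    {L : Submodule K V} [FiniteDimensional K L] (hL : finrank K L ≤ 1) (hu : u ∈ L) (hv : v ∈ L) :
    W u v = 0 := by
  obtain ⟨n, hn⟩ := finrank_le_one_iff.mp hL
  obtain ⟨c, hc⟩ := hn ⟨u, hu⟩
  obtain ⟨d, hd⟩ := hn ⟨v, hv⟩
  obtain rfl : c • (n : V) = u := congrArg Subtype.val hc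
  obtain rfl : d • (n : V) = v := congrArg Subtype.val hd
  simp [hW.self_eq_zero]

end LinearAlgebra

section Calculus

variable {𝕜 V W E : Type*} [NontriviallyNormedField 𝕜] [NormedAddCommGroup V] [NormedSpace 𝕜 V]
  [NormedAddCommGroup W] [NormedSpace 𝕜 W] [NormedAddCommGroup E] [NormedSpace 𝕜 E]

theorem hasDerivAt_inv_smul_bilinear (φ : V →L[𝕜] 𝕜) (L : V →L[𝕜] W →L[𝕜] E)
    {a : 𝕜 → V} {a' : V} {w : 𝕜 → W} {w' : W} {x : 𝕜}
    (ha : HasDerivAt a a' x) (hw : HasDerivAt w w' x) (hφ : φ (a x) ≠ 0) :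
    HasDerivAt (fun u => (φ (a u))⁻¹ • L (a u) (w u))
      ((φ (a x))⁻¹ • (L (a' - (φ a' / φ (a x)) • a x) (w x) + L (a x) w')) x := by
  have hφa : HasDerivAt (fun u => φ (a u)) (φ a') x := φ.hasFDerivAt.comp_hasDerivAt x ha
  have hL : HasDerivAt (fun u => L (a u) (w u)) (L (a x) w' + L a' (w x)) x :=
    L.hasDerivAt_of_bilinear (fun _ => ha) fun _ => hw
  refine ((hφa.fun_inv hφ).fun_smul hL).congr_deriv ?_
  simp only [map_sub, map_smul, sub_apply, smul_apply]
  match_scalars <;> field_simp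

theorem eq_zero_of_hasDerivAt_of_eqOn_const {f : 𝕜 → E} {f' c : E} {I : Set 𝕜} {x : 𝕜}
    (hf : HasDerivAt f f' x) (hI : IsOpen I) (hx : x ∈ I) (hc : ∀ y ∈ I, f y = c) : f' = 0 :=
  hf.unique <| (hasDerivAt_const x c).congr_of_eventuallyEq <|
    eventually_of_mem (hI.mem_nhds hx) hc

theorem differentiableOn_deriv_of_contDiffOn_two {f : 𝕜 → E} {I : Set 𝕜} (hI : IsOpen I)
    (hf : ContDiffOn 𝕜 2 f I) : DifferentiableOn 𝕜 (deriv f) I :=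
  (hf.deriv_of_isOpen hI one_add_one_eq_two.le).differentiableOn one_ne_zero

end Calculus

section Minkowski

/-- The Minkowski form `B4`, bundled as a bilinear form. -/
def minkowskiForm : LinearMap.BilinForm ℝ (Fin 4 → ℝ) :=
  Matrix.toBilin' (Matrix.diagonal ![-1, 1, 1, 1])

theorem minkowskiForm_apply (v w : Fin 4 → ℝ) : minkowskiForm v w = B4 v w := by
  simp [minkowskiForm, B4, Matrix.toBilin'_apply', dotProduct, Matrix.mulVec_diagonal,
    Fin.sum_univ_four]

theorem minkowskiForm_nondegenerate : minkowskiForm.Nondegenerate :=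
  LinearMap.BilinForm.nondegenerate_toBilin'_of_det_ne_zero' _ <| by
    simp [Matrix.det_diagonal, Fin.prod_univ_four]

theorem B4_comm (v w : Fin 4 → ℝ) : B4 v w = B4 w v := by
  simp only [B4, mul_comm]

theorem minkowskiForm_isSymm : minkowskiForm.IsSymm :=
  ⟨fun v w => by simpa only [minkowskiForm_apply] using B4_comm v w⟩

theorem B4_add_left (u v w : Fin 4 → ℝ) : B4 (u + v) w = B4 u w + B4 v w := by
  simp only [← minkowskiForm_apply, map_add, LinearMap.add_apply]

theorem B4_sub_left (u v w : Fin 4 → ℝ) : B4 (u - v) w = B4 u w - B4 v w := by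
  simp only [← minkowskiForm_apply, map_sub, LinearMap.sub_apply]

theorem B4_smul_left (r : ℝ) (v w : Fin 4 → ℝ) : B4 (r • v) w = r * B4 v w := by
  simp only [← minkowskiForm_apply, map_smul, LinearMap.smul_apply, smul_eq_mul]

/-- The wedge product `wedge`, bundled as a bilinear map. -/
def wedgeBilin : (Fin 4 → ℝ) →ₗ[ℝ] (Fin 4 → ℝ) →ₗ[ℝ] Fin 4 → Fin 4 → ℝ :=
  LinearMap.mk₂ ℝ wedge
    (fun _ _ _ => by ext; simp [wedge]; ring) (fun _ _ _ => by ext; simp [wedge]; ring)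
    (fun _ _ _ => by ext; simp [wedge]; ring) (fun _ _ _ => by ext; simp [wedge]; ring)

theorem wedgeBilin_apply (v w : Fin 4 → ℝ) : wedgeBilin v w = wedge v w := rfl

theorem wedgeBilin_isAlt : wedgeBilin.IsAlt := fun v => by
  ext i j
  simp [wedgeBilin_apply, wedge, mul_comm]

theorem wedge_neg_right_swap (v w : Fin 4 → ℝ) : wedge w (-v) = wedge v w := by
  rw [← wedgeBilin_apply, map_neg, wedgeBilin_isAlt.neg, wedgeBilin_apply]

theorem wedge_eq_zero_of_mem_orthogonal {a b e u v : Fin 4 → ℝ} (haa : B4 a a = 0)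
    (hbb : B4 b b = 0) (hab : B4 a b ≠ 0) (hae : B4 a e = 0) (hbe : B4 b e = 0) (he : e ≠ 0)
    (hu : u ∈ minkowskiForm.orthogonal (Submodule.span ℝ {a, b, e}))
    (hv : v ∈ minkowskiForm.orthogonal (Submodule.span ℝ {a, b, e})) : wedge u v = 0 := by
  simp only [← minkowskiForm_apply] at haa hbb hab hae hbe
  have hline := finrank_orthogonal_span_isotropic_pair_of_orthogonal minkowskiForm_nondegenerate
    minkowskiForm_isSymm.isRefl haa hbb hab hae hbe he
  rw [finrank_fin_fun] at hline
  exact isAlt_apply_eq_zero_of_mem_of_finrank_le_one wedgeBilin_isAlt hline.le hu hv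

theorem hasDerivAt_B4 {f g : ℝ → Fin 4 → ℝ} {f' g' : Fin 4 → ℝ} {x : ℝ}
    (hf : HasDerivAt f f' x) (hg : HasDerivAt g g' x) :
    HasDerivAt (fun u => B4 (f u) (g u)) (B4 (f x) g' + B4 f' (g x)) x := by
  simpa only [LinearMap.toContinuousBilinearMap_apply, minkowskiForm_apply] using
    minkowskiForm.toContinuousBilinearMap.hasDerivAt_of_bilinear (fun _ => hf) fun _ => hg

theorem hasDerivAt_B4_const {f : ℝ → Fin 4 → ℝ} {f' : Fin 4 → ℝ} {x : ℝ} (hf : HasDerivAt f f' x)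
    (w : Fin 4 → ℝ) : HasDerivAt (fun u => B4 (f u) w) (B4 f' w) x := by
  simpa [B4] using hasDerivAt_B4 hf (hasDerivAt_const x w)

theorem B4_deriv_eq_zero_of_eqOn_const {I : Set ℝ} (hI : IsOpen I) {γ : ℝ → Fin 4 → ℝ}
    (hγ : DifferentiableOn ℝ γ I) {e : Fin 4 → ℝ} {c : ℝ} (hc : ∀ s ∈ I, B4 (γ s) e = c) :
    ∀ s ∈ I, B4 (deriv γ s) e = 0 := fun _ hs =>
  eq_zero_of_hasDerivAt_of_eqOn_const
    (hasDerivAt_B4_const (hγ.hasDerivAt (hI.mem_nhds hs)) e) hI hs hc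

theorem B4_deriv_self_eq_zero_of_eqOn_const {I : Set ℝ} (hI : IsOpen I) {γ : ℝ → Fin 4 → ℝ}
    (hγ : DifferentiableOn ℝ γ I) {c : ℝ} (hc : ∀ s ∈ I, B4 (γ s) (γ s) = c) :
    ∀ s ∈ I, B4 (deriv γ s) (γ s) = 0 := by
  intro s hs
  have hγs := hγ.hasDerivAt (hI.mem_nhds hs)
  have h := eq_zero_of_hasDerivAt_of_eqOn_const (hasDerivAt_B4 hγs hγs) hI hs hc
  rwa [B4_comm, add_self_eq_zero] at h

end Minkowski

section Surface

variable {α β : ℝ → Fin 4 → ℝ} {s t : ℝ}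

theorem msq_swap (α β : ℝ → Fin 4 → ℝ) (s t : ℝ) : msq α β s t = msq β α t s := by
  rw [msq, msq, B4_comm]

theorem eta2_eq_eta1_swap (α β : ℝ → Fin 4 → ℝ) (s t : ℝ) : eta2 α β s t = eta1 β α t s := by
  rw [eta1, eta2, B4_comm (deriv α s) (deriv β t)]

theorem B4_eta1_deriv_right (hαβ : B4 (deriv α s) (deriv β t) ≠ 0) :
    B4 (eta1 α β s t) (deriv β t) = 0 := by
  rw [eta1, B4_sub_left, B4_smul_left, div_mul_cancel₀ _ hαβ, sub_self]

theorem B4_eta1_eq_zero_of_orthogonal {e : Fin 4 → ℝ} (h₁ : B4 (deriv α s) e = 0)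
    (h₂ : B4 (deriv (deriv α) s) e = 0) : B4 (eta1 α β s t) e = 0 := by
  rw [eta1, B4_sub_left, B4_smul_left, h₁, h₂, mul_zero, sub_zero]

theorem B4_eta1_eta2 (hαβ : B4 (deriv α s) (deriv β t) ≠ 0) :
    B4 (eta1 α β s t) (eta2 α β s t) =
      B4 (deriv (deriv α) s) (deriv (deriv β) t) -
        B4 (deriv (deriv α) s) (deriv β t) / B4 (deriv α s) (deriv β t) *
          B4 (deriv α s) (deriv (deriv β) t) := by
  rw [B4_comm, eta2, B4_sub_left, B4_smul_left, B4_comm _ (eta1 α β s t),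
    B4_comm _ (eta1 α β s t), B4_eta1_deriv_right hαβ, mul_zero, sub_zero, eta1, B4_sub_left,
    B4_smul_left]

theorem hasDerivAt_eta2 (hα : DifferentiableAt ℝ (deriv α) s)
    (hαβ : B4 (deriv α s) (deriv β t) ≠ 0) :
    HasDerivAt (fun u => eta2 α β u t)
      ((B4 (eta1 α β s t) (eta2 α β s t) / msq α β s t) • deriv β t) s := by
  have hnum := hasDerivAt_B4_const hα.hasDerivAt (deriv (deriv β) t)
  have hden := hasDerivAt_B4_const hα.hasDerivAt (deriv β t)
  have heta : (fun u => eta2 α β u t) = fun u => deriv (deriv β) t -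
      (B4 (deriv α u) (deriv (deriv β) t) / B4 (deriv α u) (deriv β t)) • deriv β t := by
    funext u
    rw [eta2, B4_comm (deriv (deriv β) t)]
  rw [heta]
  refine (((hnum.fun_div hden hαβ).smul_const (deriv β t)).const_sub _).congr_deriv ?_
  rw [← neg_smul, B4_eta1_eta2 hαβ, msq]
  congr 1
  field_simp

theorem hasDerivAt_inv_msq_smul_wedge (hα : DifferentiableAt ℝ (deriv α) s)
    (hαβ : B4 (deriv α s) (deriv β t) ≠ 0) {w : ℝ → Fin 4 → ℝ} {w' : Fin 4 → ℝ}
    (hw : HasDerivAt w w' s) :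
    HasDerivAt (fun u => (msq α β u t)⁻¹ • wedge (deriv α u) (w u))
      ((msq α β s t)⁻¹ • (wedge (eta1 α β s t) (w s) + wedge (deriv α s) w')) s := by
  let φ : (Fin 4 → ℝ) →L[ℝ] ℝ := (-minkowskiForm.flip (deriv β t)).toContinuousLinearMap
  have hφ : ∀ v, φ v = -B4 v (deriv β t) := fun v => by simp [φ, minkowskiForm_apply]
  have h := hasDerivAt_inv_smul_bilinear φ wedgeBilin.toContinuousBilinearMap hα.hasDerivAt hw
    (by rwa [hφ, neg_ne_zero])
  simp only [hφ, neg_div_neg_eq, LinearMap.toContinuousBilinearMap_apply, wedgeBilin_apply] at h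
  exact h

theorem pdt_gaussMap (hβ : DifferentiableAt ℝ (deriv β) t)
    (hαβ : B4 (deriv α s) (deriv β t) ≠ 0) :
    pdt (gaussMap α β) s t = (msq α β s t)⁻¹ • wedge (deriv α s) (eta2 α β s t) := by
  have hν : (fun u => gaussMap α β s u) =
      fun u => (msq β α u s)⁻¹ • wedge (deriv β u) (-deriv α s) := by
    funext u
    rw [gaussMap, one_div, msq_swap, wedge_neg_right_swap]
  have h := hasDerivAt_inv_msq_smul_wedge hβ (B4_comm _ _ ▸ hαβ)
    (hasDerivAt_const t (-deriv α s))
  rw [pdt, hν, h.deriv, ← wedgeBilin_apply _ 0, map_zero, add_zero, wedge_neg_right_swap,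
    ← eta2_eq_eta1_swap, ← msq_swap]

theorem pds_pdt_gaussMap (hα : DifferentiableAt ℝ (deriv α) s)
    (hβ : DifferentiableAt ℝ (deriv β) t) (hαβ : B4 (deriv α s) (deriv β t) ≠ 0) :
    pds (pdt (gaussMap α β)) s t =
      (msq α β s t)⁻¹ • wedge (eta1 α β s t) (eta2 α β s t) +
        (B4 (eta1 α β s t) (eta2 α β s t) / msq α β s t) • gaussMap α β s t := by
  have hne : ∀ᶠ u in 𝓝 s, B4 (deriv α u) (deriv β t) ≠ 0 :=
    (hasDerivAt_B4_const hα.hasDerivAt (deriv β t)).continuousAt.eventually_ne hαβ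
  have hpdt : (fun u => pdt (gaussMap α β) u t) =ᶠ[𝓝 s]
      fun u => (msq α β u t)⁻¹ • wedge (deriv α u) (eta2 α β u t) :=
    hne.mono fun u hu => pdt_gaussMap hβ hu
  rw [pds, hpdt.deriv_eq,
    (hasDerivAt_inv_msq_smul_wedge hα hαβ (hasDerivAt_eta2 hα hαβ)).deriv, smul_add,
    ← wedgeBilin_apply _ (_ • _), map_smul, wedgeBilin_apply, smul_comm, gaussMap, one_div]

theorem lap_gaussMap (hα : DifferentiableAt ℝ (deriv α) s)
    (hβ : DifferentiableAt ℝ (deriv β) t) (hαβ : B4 (deriv α s) (deriv β t) ≠ 0) :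
    lap α β (gaussMap α β) s t =
      (2 / msq α β s t ^ 2) • wedge (eta1 α β s t) (eta2 α β s t) +
        (2 * (B4 (eta1 α β s t) (eta2 α β s t) / msq α β s t ^ 2)) • gaussMap α β s t := by
  rw [lap, pds_pdt_gaussMap hα hβ hαβ]
  match_scalars <;> field_simp

theorem eta1_mem_orthogonal (hαβ : B4 (deriv α s) (deriv β t) ≠ 0)
    (hnull : B4 (deriv α s) (deriv α s) = 0) (hnull' : B4 (deriv (deriv α) s) (deriv α s) = 0)
    {e : Fin 4 → ℝ} (he : B4 (deriv α s) e = 0) (he' : B4 (deriv (deriv α) s) e = 0) :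
    eta1 α β s t ∈ minkowskiForm.orthogonal (Submodule.span ℝ {deriv α s, deriv β t, e}) := by
  simp only [mem_orthogonal_span_iff, mem_insert_iff, mem_singleton_iff, forall_eq_or_imp,
    forall_eq, minkowskiForm_apply, B4_comm _ (eta1 α β s t)]
  exact ⟨B4_eta1_eq_zero_of_orthogonal hnull hnull', B4_eta1_deriv_right hαβ,
    B4_eta1_eq_zero_of_orthogonal he he'⟩

theorem eta2_mem_orthogonal (hαβ : B4 (deriv α s) (deriv β t) ≠ 0)
    (hnull : B4 (deriv β t) (deriv β t) = 0) (hnull' : B4 (deriv (deriv β) t) (deriv β t) = 0)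
    {e : Fin 4 → ℝ} (he : B4 (deriv β t) e = 0) (he' : B4 (deriv (deriv β) t) e = 0) :
    eta2 α β s t ∈ minkowskiForm.orthogonal (Submodule.span ℝ {deriv α s, deriv β t, e}) := by
  rw [eta2_eq_eta1_swap, insert_comm]
  exact eta1_mem_orthogonal (B4_comm _ _ ▸ hαβ) hnull hnull' he he'

end Surface

theorem hyperplane_implies_pointwise_one_type_first_kind_general
    {I₁ I₂ : Set ℝ} (hI₁ : IsOpen I₁) (hI₂ : IsOpen I₂) {α β : ℝ → Fin 4 → ℝ}
    (hα : ContDiffOn ℝ 2 α I₁) (hβ : ContDiffOn ℝ 2 β I₂)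
    (hαnull : ∀ s ∈ I₁, B4 (deriv α s) (deriv α s) = 0)
    (hβnull : ∀ t ∈ I₂, B4 (deriv β t) (deriv β t) = 0)
    (hαβ : ∀ s ∈ I₁, ∀ t ∈ I₂, B4 (deriv α s) (deriv β t) ≠ 0)
    {e : Fin 4 → ℝ} (he : e ≠ 0) {c : ℝ} (hplane : ∀ s ∈ I₁, ∀ t ∈ I₂, B4 (α s + β t) e = c) :
    ∀ s ∈ I₁, ∀ t ∈ I₂,
      wedge (eta1 α β s t) (eta2 α β s t) = 0 ∧
      lap α β (gaussMap α β) s t =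
        (2 * (B4 (eta1 α β s t) (eta2 α β s t) / (msq α β s t) ^ 2)) • gaussMap α β s t := by
  intro s hs t ht
  have hα' := differentiableOn_deriv_of_contDiffOn_two hI₁ hα
  have hβ' := differentiableOn_deriv_of_contDiffOn_two hI₂ hβ
  have hαe : ∀ s ∈ I₁, B4 (deriv α s) e = 0 :=
    B4_deriv_eq_zero_of_eqOn_const hI₁ (hα.differentiableOn two_ne_zero) fun s hs =>
      eq_sub_of_add_eq (B4_add_left (α s) (β t) e ▸ hplane s hs t ht)
  have hβe : ∀ t ∈ I₂, B4 (deriv β t) e = 0 :=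
    B4_deriv_eq_zero_of_eqOn_const hI₂ (hβ.differentiableOn two_ne_zero) fun t ht =>
      eq_sub_of_add_eq' (B4_add_left (α s) (β t) e ▸ hplane s hs t ht)
  have hη₁ := eta1_mem_orthogonal (hαβ s hs t ht) (hαnull s hs)
    (B4_deriv_self_eq_zero_of_eqOn_const hI₁ hα' hαnull s hs) (hαe s hs)
    (B4_deriv_eq_zero_of_eqOn_const hI₁ hα' hαe s hs)
  have hη₂ := eta2_mem_orthogonal (hαβ s hs t ht) (hβnull t ht)
    (B4_deriv_self_eq_zero_of_eqOn_const hI₂ hβ' hβnull t ht) (hβe t ht)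
    (B4_deriv_eq_zero_of_eqOn_const hI₂ hβ' hβe t ht)
  have hwedge : wedge (eta1 α β s t) (eta2 α β s t) = 0 :=
    wedge_eq_zero_of_mem_orthogonal (hαnull s hs) (hβnull t ht) (hαβ s hs t ht)
      (hαe s hs) (hβe t ht) he hη₁ hη₂
  refine ⟨hwedge, ?_⟩
  rw [lap_gaussMap (hα'.differentiableAt (hI₁.mem_nhds hs))
    (hβ'.differentiableAt (hI₂.mem_nhds ht)) (hαβ s hs t ht), hwedge, smul_zero, zero_add]

/-- Proposition 3.2(i) / Corollary 3.7 direction: a minimal Lorentzian surface lying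
in a Lorentzian hyperplane `{y : B(y,e₄) = c}` (with `B(e₄,e₄) > 0`) has `η₁ ∧ η₂ ≡ 0`
and its Gauss map satisfies `Δν = 2K·ν` with `K = B(η₁,η₂)/m⁴`: pointwise 1-type of
the first kind. -/
theorem hyperplane_implies_pointwise_one_type_first_kind
    (I₁ I₂ : Set ℝ) (hI₁ : IsOpen I₁) (hI₂ : IsOpen I₂)
    (hI₁' : I₁.OrdConnected) (hI₂' : I₂.OrdConnected)
    (α β : ℝ → Fin 4 → ℝ)
    (hα : ContDiffOn ℝ (⊤ : ℕ∞) α I₁) (hβ : ContDiffOn ℝ (⊤ : ℕ∞) β I₂)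
    (hαnull : ∀ s ∈ I₁, B4 (deriv α s) (deriv α s) = 0)
    (hβnull : ∀ t ∈ I₂, B4 (deriv β t) (deriv β t) = 0)
    (hneg : ∀ s ∈ I₁, ∀ t ∈ I₂, B4 (deriv α s) (deriv β t) < 0)
    (e₄ : Fin 4 → ℝ) (he₄ : 0 < B4 e₄ e₄) (c : ℝ)
    (hplane : ∀ s ∈ I₁, ∀ t ∈ I₂, B4 (α s + β t) e₄ = c) :
    ∀ s ∈ I₁, ∀ t ∈ I₂,
      wedge (eta1 α β s t) (eta2 α β s t) = 0 ∧
      lap α β (gaussMap α β) s t =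
        (2 * (B4 (eta1 α β s t) (eta2 α β s t) / (msq α β s t) ^ 2)) •
          gaussMap α β s t := by
  have he₄' : e₄ ≠ 0 := fun h => he₄.ne' (by simp [h, B4])
  exact hyperplane_implies_pointwise_one_type_first_kind_general hI₁ hI₂
    (contDiffOn_infty.1 hα 2) (contDiffOn_infty.1 hβ 2) hαnull hβnull
    (fun s hs t ht => (hneg s hs t ht).ne) he₄' hplane
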